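/- There is an absolute constant C ≥ 16 such that: if P is a polynomial (with complex coefficients) of degree d ≥ 1 with |P(x)| ≤ 1 for all real x ∈ [−1, 1], then its derivative satisfies |P'(z)| ≤ (C|z|)^d for every complex z with |z| ≥ 1. -/

import Mathlib

/-!
Interpolate `P` at the `d + 1` equally spaced nodes `i / d` of `[0, 1]`. The denominators of the
Lagrange basis are `∏_{j ≠ i} |i - j| / d = i! (d - i)! / d ^ d`, so `|P| ≤ 1` at the nodes gives
`|P(w)| ≤ (|w| + 1) ^ d * d ^ d * ∑ 1 / (i! (d - i)!) = (2 (|w| + 1)) ^ d * d ^ d / d!`, and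
`d ^ d / d! ≤ e ^ d ≤ 3 ^ d` turns this into `|P(w)| ≤ (6 (|w| + 1)) ^ d`. Cauchy's estimate on the
circle of radius `1` about `z`, where `|w| + 1 ≤ |z| + 2 ≤ 3 |z|`, then gives the claim with
`C = 18`.
-/

lemma prod_abs_sub_erase (i d : ℕ) (h : i ≤ d) :
    ∏ j ∈ (Finset.range (d + 1)).erase i, |(i : ℝ) - j| = i.factorial * (d - i).factorial := by
  induction d, h using Nat.le_induction with
  | base =>
    have h1 : (Finset.range (i + 1)).erase i = Finset.range i := by
      ext j; simp; omega
    rw [h1, ← Finset.prod_range_reflect, ← Finset.prod_range_add_one_eq_factorial]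
    simp only [Nat.sub_self, Nat.factorial_zero, Nat.cast_one, mul_one, Nat.cast_prod]
    refine Finset.prod_congr rfl fun j hj => ?_
    have hj := Finset.mem_range.1 hj
    have h2 : ((i - 1 - j : ℕ) : ℝ) = (i : ℝ) - 1 - j := by
      rw [Nat.cast_sub (by omega), Nat.cast_sub (by omega)]; simp
    rw [h2, show (i : ℝ) - (i - 1 - j) = ((j + 1 : ℕ) : ℝ) by push_cast; ring]
    exact abs_of_nonneg (by positivity)
  | succ d hd ih =>
    have h1 : (Finset.range (d + 1 + 1)).erase i
        = insert (d + 1) ((Finset.range (d + 1)).erase i) := by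
      ext j; simp; omega
    rw [h1, Finset.prod_insert (by simp), ih, Nat.succ_sub hd, Nat.factorial_succ, abs_sub_comm]
    have h2 : ((d + 1 : ℕ) : ℝ) - i = ((d - i + 1 : ℕ) : ℝ) := by
      push_cast [Nat.cast_sub hd]; ring
    rw [h2, abs_of_nonneg (by positivity)]
    push_cast; ring

/-- Bernstein–Walsh-type growth bound off `[0, 1]`, with a non-sharp constant. -/
lemma poly_growth_bound (P : Polynomial ℂ) (d : ℕ) (hP : P.natDegree = d) (hd : 1 ≤ d)
    (h : ∀ x : ℝ, x ∈ Set.Icc (0 : ℝ) 1 → ‖P.eval (x : ℂ)‖ ≤ 1) (w : ℂ) :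
    ‖P.eval w‖ ≤ (6 * (‖w‖ + 1)) ^ d := by
  have hd0 : (0 : ℝ) < d := by exact_mod_cast hd
  have hdc : (d : ℂ) ≠ 0 := by exact_mod_cast hd0.ne'
  set s := Finset.range (d + 1) with hs
  set v : ℕ → ℂ := fun i => (((i : ℝ) / d : ℝ) : ℂ) with hv
  have hvs : Set.InjOn v s := by
    intro i _ j _ hij
    have h1 : (i : ℝ) / d = (j : ℝ) / d := Complex.ofReal_injective hij
    have h2 : (i : ℝ) = j := by field_simp at h1; exact h1
    exact_mod_cast h2
  have hdeg : P.degree < s.card := by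
    rw [hs, Finset.card_range]
    exact lt_of_le_of_lt Polynomial.degree_le_natDegree
      (by rw [hP]; exact_mod_cast Nat.lt_succ_self d)
  have hmem : ∀ i ∈ s, (i : ℝ) / d ∈ Set.Icc (0 : ℝ) 1 := by
    intro i hi
    have hi : i ≤ d := Nat.lt_succ_iff.1 (Finset.mem_range.1 hi)
    exact ⟨by positivity, by rw [div_le_one hd0]; exact_mod_cast hi⟩
  have hbasis : ∀ i ∈ s, ‖(Lagrange.basis s v i).eval w‖ ≤
      (‖w‖ + 1) ^ d * d ^ d / (i.factorial * (d - i).factorial) := by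
    intro i hi
    have hi' : i ≤ d := Nat.lt_succ_iff.1 (Finset.mem_range.1 hi)
    have hcard : (s.erase i).card = d := by rw [Finset.card_erase_of_mem hi, hs]; simp
    rw [← prod_abs_sub_erase i d hi', Lagrange.basis, Polynomial.eval_prod, norm_prod]
    have hconst : (‖w‖ + 1) ^ d * (d : ℝ) ^ d = ∏ _j ∈ s.erase i, ((‖w‖ + 1) * d) := by
      rw [Finset.prod_const, hcard, mul_pow]
    rw [hconst, ← Finset.prod_div_distrib]
    refine Finset.prod_le_prod (fun _ _ => norm_nonneg _) fun j hj => ?_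
    have hj2 := hmem j (Finset.mem_of_mem_erase hj)
    have hvj : ‖v j‖ ≤ 1 := by
      rw [hv, Complex.norm_real, Real.norm_of_nonneg hj2.1]; exact hj2.2
    have hdiff : ‖v i - v j‖ = |(i : ℝ) - j| / d := by
      rw [hv, ← Complex.ofReal_sub, Complex.norm_real, ← sub_div, Real.norm_eq_abs, abs_div,
        abs_of_pos hd0]
    rw [Lagrange.basisDivisor]
    simp only [Polynomial.eval_mul, Polynomial.eval_C, Polynomial.eval_sub, Polynomial.eval_X,
      norm_mul, norm_inv]
    rw [hdiff, inv_div, div_mul_eq_mul_div, mul_comm]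
    gcongr
    exact (norm_sub_le _ _).trans (by linarith)
  have hsum : ∑ i ∈ s, (1 : ℝ) / (i.factorial * (d - i).factorial) = 2 ^ d / d.factorial := by
    rw [eq_div_iff (by positivity), Finset.sum_mul]
    have h2 := Nat.sum_range_choose d
    have h3 : ∑ i ∈ s, ((d.choose i : ℕ) : ℝ) = 2 ^ d := by exact_mod_cast h2
    rw [← h3]
    refine Finset.sum_congr rfl fun i hi => ?_
    rw [Nat.cast_choose ℝ (Nat.lt_succ_iff.1 (Finset.mem_range.1 hi))]
    ring
  have hfact : (d : ℝ) ^ d / d.factorial ≤ 3 ^ d := by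
    refine (Real.pow_div_factorial_le_exp (d : ℝ) hd0.le d).trans ?_
    rw [← mul_one (d : ℝ), Real.exp_nat_mul]
    exact pow_le_pow_left₀ (Real.exp_pos _).le (by linarith [Real.exp_one_lt_d9]) d
  rw [Lagrange.eq_interpolate hvs hdeg, Lagrange.interpolate_apply, Polynomial.eval_finsetSum]
  calc ‖∑ i ∈ s, (Polynomial.C (P.eval (v i)) * Lagrange.basis s v i).eval w‖
      ≤ ∑ i ∈ s, (‖w‖ + 1) ^ d * d ^ d / (i.factorial * (d - i).factorial) := by
        refine norm_sum_le_of_le _ fun i hi => ?_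
        rw [Polynomial.eval_mul, Polynomial.eval_C, norm_mul]
        calc _ ≤ 1 * ‖(Lagrange.basis s v i).eval w‖ := by
              gcongr; exact h _ (hmem i hi)
          _ ≤ _ := by rw [one_mul]; exact hbasis i hi
    _ = (‖w‖ + 1) ^ d * 2 ^ d * (d ^ d / d.factorial) := by
        have : ∀ i ∈ s, (‖w‖ + 1) ^ d * (d : ℝ) ^ d / (i.factorial * (d - i).factorial)
            = (‖w‖ + 1) ^ d * d ^ d * (1 / (i.factorial * (d - i).factorial)) :=
          fun i _ => by ring
        rw [Finset.sum_congr rfl this, ← Finset.mul_sum, hsum]; ring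
    _ ≤ (‖w‖ + 1) ^ d * 2 ^ d * 3 ^ d := by gcongr
    _ = (6 * (‖w‖ + 1)) ^ d := by
        rw [← mul_pow, ← mul_pow]; ring

/-- There is an absolute constant `C ≥ 16` such that if a polynomial `P` of degree `d ≥ 1`
satisfies `|P| ≤ 1` on `[-1,1]`, then `|P'(z)| ≤ (C|z|)^d` for `|z| ≥ 1`. -/
theorem poly_deriv_growth_bound :
    ∃ C : ℝ, 16 ≤ C ∧ ∀ P : Polynomial ℂ, ∀ d : ℕ, P.natDegree = d → 1 ≤ d →
      (∀ x : ℝ, x ∈ Set.Icc (-1:ℝ) 1 → ‖P.eval (x:ℂ)‖ ≤ 1) →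
      ∀ z : ℂ, 1 ≤ ‖z‖ → ‖(Polynomial.derivative P).eval z‖ ≤ (C * ‖z‖) ^ d := by
  refine ⟨18, by norm_num, fun P d hP hd h z hz => ?_⟩
  have hc := Complex.norm_deriv_le_of_forall_mem_sphere_norm_le (f := fun w => P.eval w) (c := z)
    (R := 1) (C := (18 * ‖z‖) ^ d) one_pos P.differentiable.diffContOnCl fun w hw => by
      refine (poly_growth_bound P d hP hd
        (fun x hx => h x ⟨by linarith [hx.1], hx.2⟩) w).trans ?_
      have hw1 : ‖w - z‖ = 1 := by simpa using hw
      have hw2 : ‖w‖ ≤ ‖z‖ + 1 := by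
        have := norm_le_norm_add_norm_sub' w z
        linarith
      exact pow_le_pow_left₀ (by positivity) (by linarith) d
  rw [Polynomial.deriv, div_one] at hc
  exact hc
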